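/- Let S be a finite inverse semigroup with zero. Then the map β : S → K(𝒢(S)) given by β(0) = ∅ and β(a) = {x ∈ 𝒢(S) : x ≤ a} for a ≠ 0 is a zero-preserving injective homomorphism which is universal among zero-preserving homomorphisms from S to Boolean inverse semigroups: for every zero-preserving homomorphism α : S → T with T a Boolean inverse semigroup, there is a unique morphism (additive homomorphism) γ : K(𝒢(S)) → T with γ ∘ β = α. In other words, the Booleanization of S is K(𝒢(S)). -/

import Mathlib

namespace Paper

/-- An inverse semigroup with zero: an associative multiplication, a zero that is
absorbing, and a map `⁻¹` sending each element to its unique generalized inverse. -/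
class IsInverseSemigroup (S : Type*) [Mul S] [Zero S] [Inv S] : Prop where
  mul_assoc : ∀ a b c : S, a * b * c = a * (b * c)
  mul_inv_mul : ∀ a : S, a * a⁻¹ * a = a
  inv_mul_inv : ∀ a : S, a⁻¹ * a * a⁻¹ = a⁻¹
  inv_unique : ∀ a b : S, a * b * a = a → b * a * b = b → b = a⁻¹
  zero_mul : ∀ a : S, 0 * a = 0
  mul_zero : ∀ a : S, a * 0 = 0

variable {S : Type*} [Mul S] [Zero S] [Inv S]

/-- The natural partial order: `a ≤ b` iff `a = b * a⁻¹ * a`. -/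
def nle (a b : S) : Prop := a = b * a⁻¹ * a

/-- `e` is an idempotent. -/
def idem (e : S) : Prop := e * e = e

/-- `a` and `b` are compatible. -/
def compat (a b : S) : Prop := idem (a⁻¹ * b) ∧ idem (a * b⁻¹)

/-- `a` and `b` are orthogonal. -/
def orth (a b : S) : Prop := a⁻¹ * b = 0 ∧ a * b⁻¹ = 0

/-- `j` is the least upper bound of `a` and `b` for the natural partial order. -/
def isJoin (a b j : S) : Prop :=
  nle a j ∧ nle b j ∧ ∀ c : S, nle a c → nle b c → nle j c

/-- `m` is the greatest lower bound of `a` and `b` for the natural partial order. -/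
def isMeet (a b m : S) : Prop :=
  nle m a ∧ nle m b ∧ ∀ c : S, nle c a → nle c b → nle c m

/-- `a` is an atom: a nonzero element with nothing strictly between it and `0`. -/
def isAtomElem (a : S) : Prop := a ≠ 0 ∧ ∀ x : S, nle x a → x = a ∨ x = 0

/-- `s` is the least upper bound of the finite family `f`. -/
def isJoinFin {m : ℕ} (f : Fin m → S) (s : S) : Prop :=
  (∀ i, nle (f i) s) ∧ ∀ c : S, (∀ i, nle (f i) c) → nle s c

/-- A Boolean inverse semigroup: a nonzero inverse semigroup with zero in which
compatible pairs have joins, multiplication distributes over binary compatible joins,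
and the idempotents form a generalized Boolean algebra under the natural partial
order (meets of idempotents are automatically given by multiplication; the extra
requirement is the existence of relative complements). -/
class IsBooleanInverseSemigroup (S : Type*) [Mul S] [Zero S] [Inv S]
    extends IsInverseSemigroup S : Prop where
  exists_ne_zero : ∃ a : S, a ≠ 0
  compat_join : ∀ a b : S, compat a b → ∃ j, isJoin a b j
  mul_join : ∀ a b j c : S, isJoin a b j → isJoin (c * a) (c * b) (c * j)
  join_mul : ∀ a b j c : S, isJoin a b j → isJoin (a * c) (b * c) (j * c)
  relcomp : ∀ e f : S, idem e → idem f → nle f e →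
    ∃ g : S, idem g ∧ nle g e ∧ g * f = 0 ∧ isJoin f g e


/-- `A` is a local bisection of the groupoid of atoms of `S` (under the restricted
product): a set of atoms in which elements with equal domains are equal and
elements with equal ranges are equal. -/
def lbAtoms {S : Type*} [Mul S] [Zero S] [Inv S] (A : Set S) : Prop :=
  (∀ x ∈ A, isAtomElem x) ∧
    ∀ x ∈ A, ∀ y ∈ A, (x⁻¹ * x = y⁻¹ * y → x = y) ∧ (x * x⁻¹ = y * y⁻¹ → x = y)

/-- The setwise product of subsets of `S` with respect to the restricted product:
`x · y` is included when `d(x) = r(y)`. -/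
def restrictedSetMul {S : Type*} [Mul S] [Inv S] (A B : Set S) : Set S :=
  {z | ∃ x ∈ A, ∃ y ∈ B, x⁻¹ * x = y * y⁻¹ ∧ z = x * y}

/-- The map sending an element to the set of atoms below it. -/
def theta {S : Type*} [Mul S] [Zero S] [Inv S] (a : S) : Set S :=
  {x | isAtomElem x ∧ nle x a}

/-- `A` is a local bisection of the restricted groupoid `𝒢(S)` of `S` (the nonzero
elements of `S` under the restricted product). -/
def KGlb {S : Type*} [Mul S] [Zero S] [Inv S] (A : Set S) : Prop :=
  (∀ x ∈ A, x ≠ 0) ∧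
    ∀ x ∈ A, ∀ y ∈ A, (x⁻¹ * x = y⁻¹ * y → x = y) ∧ (x * x⁻¹ = y * y⁻¹ → x = y)

/-- The canonical map `β : S → K(𝒢(S))`, sending `a` to the set of nonzero
elements below `a` (so `β(0) = ∅`). -/
def betaMap {S : Type*} [Mul S] [Zero S] [Inv S] (a : S) : Set S :=
  {x | x ≠ 0 ∧ nle x a}

/-- `γ` is a morphism `K(𝒢(S)) → T` of Boolean inverse semigroups: it sends the
zero `∅` to `0`, products of local bisections (the setwise restricted product) to
products, and binary compatible joins (unions of local bisections whose union is a
local bisection) to joins. -/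
def isKGMorphism {S : Type*} {T : Type*} [Mul S] [Zero S] [Inv S]
    [Mul T] [Zero T] [Inv T] (γ : Set S → T) : Prop :=
  γ (∅ : Set S) = 0 ∧
  (∀ A B : Set S, KGlb A → KGlb B → γ (restrictedSetMul A B) = γ A * γ B) ∧
  (∀ A B : Set S, KGlb A → KGlb B → KGlb (A ∪ B) →
    isJoin (γ A) (γ B) (γ (A ∪ B)))

universe u v

/-!
A morphism `γ` with `γ ∘ β = α` has no freedom on singletons: `β x` is the disjoint union of `{x}`
and the sets `β y` with `y < x`, so `γ {x}` is the part of `α x` orthogonal to every `α y` with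
`y < x`. This strict part exists because idempotents have relative complements, and it is unique.
Strict parts multiply like elements of the restricted groupoid: the product of those at `x` and `y`
is the one at `x * y` if `d(x) = r(y)`, and `0` otherwise. Distinct elements of a local bisection
have orthogonal strict parts, so `γ A` can be defined as the join of the strict parts at the
elements of `A`; distributivity of multiplication over finite joins makes `γ` multiplicative. Local
bisections are finite as soon as there are finitely many idempotents, because their elements are
separated by domains.
-/

section Semigroup

variable [IsInverseSemigroup S] {e f : S}

instance : SemigroupWithZero S where
  mul_assoc := IsInverseSemigroup.mul_assoc
  zero_mul := IsInverseSemigroup.zero_mul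
  mul_zero := IsInverseSemigroup.mul_zero

instance : InvolutiveInv S where
  inv_inv a := (IsInverseSemigroup.inv_unique a⁻¹ a (IsInverseSemigroup.inv_mul_inv a)
    (IsInverseSemigroup.mul_inv_mul a)).symm

@[simp]
theorem mul_inv_mul_self (a : S) : a * (a⁻¹ * a) = a := by
  rw [← mul_assoc, IsInverseSemigroup.mul_inv_mul]

@[simp]
theorem inv_mul_inv_self (a : S) : a⁻¹ * (a * a⁻¹) = a⁻¹ := by
  rw [← mul_assoc, IsInverseSemigroup.inv_mul_inv]

@[simp]
theorem mul_inv_mul_self_left (a c : S) : a * (a⁻¹ * (a * c)) = a * c := by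
  rw [← mul_assoc, ← mul_assoc, IsInverseSemigroup.mul_inv_mul]

@[simp]
theorem inv_mul_inv_self_left (a c : S) : a⁻¹ * (a * (a⁻¹ * c)) = a⁻¹ * c := by
  simpa only [inv_inv] using mul_inv_mul_self_left a⁻¹ c

theorem idem_zero : idem (0 : S) := zero_mul 0

theorem idem_inv_mul_self (a : S) : idem (a⁻¹ * a) := by
  simp only [idem, mul_assoc, mul_inv_mul_self]

theorem idem_mul_inv_self (a : S) : idem (a * a⁻¹) := by
  simp only [idem, mul_assoc, inv_mul_inv_self]

theorem idem.mul_self_mul (he : idem e) (a : S) : e * (e * a) = e * a := by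
  rw [← mul_assoc, he]

theorem idem.inv_eq (he : idem e) : e⁻¹ = e :=
  (IsInverseSemigroup.inv_unique e e (by rw [he, he]) (by rw [he, he])).symm

-- The inverse `x` of `e * f` equals `f * x * e`, which is visibly idempotent.
theorem idem.mul (he : idem e) (hf : idem f) : idem (e * f) := by
  have inv_eq : f * ((e * f)⁻¹ * e) = (e * f)⁻¹ := by
    have h := mul_inv_mul_self (e * f)
    have h' := inv_mul_inv_self_left (e * f) e
    apply IsInverseSemigroup.inv_unique <;>
      simp only [mul_assoc, he.mul_self_mul, hf.mul_self_mul] at h h' ⊢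
    · exact h
    · rw [h']
  have idem_inv : idem (e * f)⁻¹ := calc
    (e * f)⁻¹ * (e * f)⁻¹ = f * ((e * f)⁻¹ * (e * f * ((e * f)⁻¹ * e))) := by
      nth_rw 1 2 [← inv_eq]
      simp only [mul_assoc]
    _ = (e * f)⁻¹ := by rw [inv_mul_inv_self_left, inv_eq]
  rw [← inv_inv (e * f), idem_inv.inv_eq]
  exact idem_inv

theorem idem.mul_comm (he : idem e) (hf : idem f) : e * f = f * e := by
  have hef : e * (f * (e * f)) = e * f := by rw [← mul_assoc, he.mul hf]
  have hfe : f * (e * (f * e)) = f * e := by rw [← mul_assoc, hf.mul he]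
  rw [← (he.mul hf).inv_eq]
  refine (IsInverseSemigroup.inv_unique _ _ ?_ ?_).symm <;>
    simp only [mul_assoc, he.mul_self_mul, hf.mul_self_mul, hef, hfe]

theorem mul_inv_rev (a b : S) : (a * b)⁻¹ = b⁻¹ * a⁻¹ := by
  have h : b * (b⁻¹ * (a⁻¹ * a)) = a⁻¹ * (a * (b * b⁻¹)) := by
    simpa only [mul_assoc] using (idem_mul_inv_self b).mul_comm (idem_inv_mul_self a)
  refine (IsInverseSemigroup.inv_unique _ _ ?_ ?_).symm
  · calc a * b * (b⁻¹ * a⁻¹) * (a * b) = a * (b * (b⁻¹ * (a⁻¹ * a))) * b := by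
          simp only [mul_assoc]
      _ = a * b := by rw [h]; simp [mul_assoc]
  · calc b⁻¹ * a⁻¹ * (a * b) * (b⁻¹ * a⁻¹) = b⁻¹ * (a⁻¹ * (a * (b * b⁻¹))) * a⁻¹ := by
          simp only [mul_assoc]
      _ = b⁻¹ * a⁻¹ := by rw [← h]; simp [mul_assoc]

theorem idem.inv (he : idem e) : idem e⁻¹ := by rwa [he.inv_eq]

theorem idem.conj (he : idem e) (a : S) : idem (a⁻¹ * (e * a)) := calc
  a⁻¹ * (e * a) * (a⁻¹ * (e * a)) = a⁻¹ * (e * (a * a⁻¹) * (e * a)) := by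
    simp only [mul_assoc]
  _ = a⁻¹ * (e * a) := by
    rw [he.mul_comm (idem_mul_inv_self a)]
    simp only [mul_assoc, he.mul_self_mul, inv_mul_inv_self_left]

theorem idem.mul_eq_mul_conj (he : idem e) (a : S) : e * a = a * (a⁻¹ * (e * a)) := calc
  e * a = e * (a * a⁻¹) * a := by simp only [mul_assoc, mul_inv_mul_self]
  _ = a * (a⁻¹ * (e * a)) := by
    rw [he.mul_comm (idem_mul_inv_self a)]
    simp only [mul_assoc]

end Semigroup

section NaturalOrder

variable [IsInverseSemigroup S] {a b c e : S}

theorem nle_iff_exists_idem : nle a b ↔ ∃ e, idem e ∧ a = b * e := by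
  constructor
  · intro h
    exact ⟨a⁻¹ * a, idem_inv_mul_self a, by rw [← mul_assoc]; exact h⟩
  · rintro ⟨e, he, rfl⟩
    calc
      b * e = b * (b⁻¹ * b * e) * e := by
        simp only [mul_assoc, mul_inv_mul_self_left]
        rw [he]
      _ = b * (b * e)⁻¹ * (b * e) := by
        rw [(idem_inv_mul_self b).mul_comm he, mul_inv_rev, he.inv_eq]
        simp only [mul_assoc]

instance : PartialOrder S where
  le := nle
  le_refl a := nle_iff_exists_idem.2 ⟨a⁻¹ * a, idem_inv_mul_self a, (mul_inv_mul_self a).symm⟩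
  le_trans a b c hab hbc := by
    obtain ⟨e, he, rfl⟩ := nle_iff_exists_idem.1 hab
    obtain ⟨f, hf, rfl⟩ := nle_iff_exists_idem.1 hbc
    exact nle_iff_exists_idem.2 ⟨f * e, hf.mul he, mul_assoc c f e⟩
  le_antisymm a b hab hba := by
    obtain ⟨e, he, hae⟩ := nle_iff_exists_idem.1 hab
    obtain ⟨f, hf, hbf⟩ := nle_iff_exists_idem.1 hba
    have hae' : a * e = a := by rw [hae, mul_assoc, he]
    calc a = a * (f * e) := by rw [← mul_assoc, ← hbf, hae]
      _ = b := by rw [hf.mul_comm he, ← mul_assoc, hae', hbf]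

theorem mul_idem_le (a : S) (he : idem e) : a * e ≤ a :=
  nle_iff_exists_idem.2 ⟨e, he, rfl⟩

theorem idem_mul_le (a : S) (he : idem e) : e * a ≤ a := by
  rw [he.mul_eq_mul_conj a]
  exact mul_idem_le a (he.conj a)

theorem zero_le (a : S) : 0 ≤ a :=
  (mul_zero a).symm.trans_le (mul_idem_le a idem_zero)

theorem eq_zero_of_le_zero (h : a ≤ 0) : a = 0 :=
  h.antisymm (zero_le a)

theorem mul_inv_mul_of_le (h : a ≤ b) : b * (a⁻¹ * a) = a := by
  rw [← mul_assoc]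
  exact Eq.symm h

theorem inv_le_inv_of_le (h : a ≤ b) : a⁻¹ ≤ b⁻¹ := by
  rw [← mul_inv_mul_of_le h, mul_inv_rev, (idem_inv_mul_self a).inv_eq]
  exact idem_mul_le _ (idem_inv_mul_self a)

theorem mul_inv_mul_of_le' (h : a ≤ b) : a * a⁻¹ * b = a := by
  have h' := congrArg (·⁻¹) (mul_inv_mul_of_le (inv_le_inv_of_le h))
  simpa only [mul_inv_rev, inv_inv] using h'

instance : MulLeftMono S where
  elim c a b h := calc
    c * a = c * b * (a⁻¹ * a) := by rw [mul_assoc, mul_inv_mul_of_le h]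
    _ ≤ c * b := mul_idem_le _ (idem_inv_mul_self a)

instance : MulRightMono S where
  elim c a b h := calc
    a * c = a * a⁻¹ * (b * c) := by rw [← mul_assoc, mul_inv_mul_of_le' h]
    _ ≤ b * c := idem_mul_le _ (idem_mul_inv_self a)

/-- Inversion, as an automorphism of the natural partial order. -/
def invOrderIso (S : Type*) [Mul S] [Zero S] [Inv S] [IsInverseSemigroup S] : S ≃o S where
  toEquiv := Equiv.inv S
  map_rel_iff' {a b} :=
    ⟨fun h => by simpa only [Equiv.inv_apply, inv_inv] using inv_le_inv_of_le h, inv_le_inv_of_le⟩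

@[simp]
theorem invOrderIso_apply (a : S) : invOrderIso S a = a⁻¹ := rfl

theorem inv_mul_self_le_of_le (h : a ≤ b) : a⁻¹ * a ≤ b⁻¹ * b :=
  mul_le_mul' (inv_le_inv_of_le h) h

theorem mul_inv_self_le_of_le (h : a ≤ b) : a * a⁻¹ ≤ b * b⁻¹ :=
  mul_le_mul' h (inv_le_inv_of_le h)

theorem mul_inv_mul_self_of_le (h : a ≤ b) : a * (b⁻¹ * b) = a := by
  rw [← mul_inv_mul_of_le' h, mul_assoc, mul_inv_mul_self]

theorem mul_inv_self_mul_of_le (h : a ≤ b) : b * b⁻¹ * a = a := by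
  rw [← mul_inv_mul_of_le h]
  simp only [mul_assoc, mul_inv_mul_self_left]

theorem idem.of_le (he : idem e) (h : a ≤ e) : idem a := by
  rw [← mul_inv_mul_of_le h]
  exact he.mul (idem_inv_mul_self a)

theorem eq_of_inv_mul_self_eq (ha : a ≤ c) (hb : b ≤ c) (h : a⁻¹ * a = b⁻¹ * b) : a = b := by
  rw [← mul_inv_mul_of_le ha, h, mul_inv_mul_of_le hb]

theorem eq_of_mul_inv_self_eq (ha : a ≤ c) (hb : b ≤ c) (h : a * a⁻¹ = b * b⁻¹) : a = b := by
  rw [← mul_inv_mul_of_le' ha, h, mul_inv_mul_of_le' hb]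

theorem not_inv_mul_self_le_of_lt (h : a < b) : ¬ b⁻¹ * b ≤ a⁻¹ * a := fun hle =>
  h.ne (eq_of_inv_mul_self_eq h.le le_rfl ((inv_mul_self_le_of_le h.le).antisymm hle))

theorem not_mul_inv_self_le_of_lt (h : a < b) : ¬ b * b⁻¹ ≤ a * a⁻¹ := fun hle =>
  h.ne (eq_of_mul_inv_self_eq h.le le_rfl ((mul_inv_self_le_of_le h.le).antisymm hle))

theorem inv_mul_eq_of_le (ha : a ≤ c) (hb : b ≤ c) : a⁻¹ * b = a⁻¹ * a * (b⁻¹ * b) := calc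
  a⁻¹ * b = a⁻¹ * (c * (b⁻¹ * b)) := by rw [mul_inv_mul_of_le hb]
  _ = a⁻¹ * (a * a⁻¹ * c) * (b⁻¹ * b) := by simp only [mul_assoc, inv_mul_inv_self_left]
  _ = a⁻¹ * a * (b⁻¹ * b) := by rw [mul_inv_mul_of_le' ha]

theorem compat_of_le (ha : a ≤ c) (hb : b ≤ c) : compat a b := by
  refine ⟨?_, ?_⟩
  · rw [inv_mul_eq_of_le ha hb]
    exact (idem_inv_mul_self a).mul (idem_inv_mul_self b)
  · have h := inv_mul_eq_of_le (inv_le_inv_of_le ha) (inv_le_inv_of_le hb)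
    simp only [inv_inv] at h
    rw [h]
    exact (idem_mul_inv_self a).mul (idem_mul_inv_self b)

theorem orth_of_le_of_mul_inv_eq_zero (ha : a ≤ c) (hb : b ≤ c) (h : a * b⁻¹ = 0) : orth a b := by
  refine ⟨?_, h⟩
  calc a⁻¹ * b = a⁻¹ * (a * b⁻¹) * b := by
        rw [inv_mul_eq_of_le ha hb]
        simp only [mul_assoc]
    _ = 0 := by rw [h, mul_zero, zero_mul]

theorem orth.compat (h : orth a b) : compat a b := by
  simpa only [Paper.compat, h.1, h.2, and_self] using idem_zero

theorem orth.inv (h : orth a b) : orth a⁻¹ b⁻¹ := by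
  simpa only [orth, inv_inv, and_comm] using h

theorem isJoin_iff_isLUB : isJoin a b c ↔ IsLUB {a, b} c := by
  simp only [IsLUB, IsLeast, upperBounds_insert, upperBounds_singleton, mem_lowerBounds,
    Set.mem_inter_iff, Set.mem_Ici, and_imp, and_assoc]
  rfl

theorem idem_of_isLUB {X : Set S} (hX : ∀ x ∈ X, idem x) (h : IsLUB X a) : idem a := by
  refine (idem_inv_mul_self a).of_le (h.2 fun x hx => ?_)
  have hle := inv_mul_self_le_of_le (h.1 hx)
  rwa [(hX x hx).inv_eq, hX x hx] at hle

end NaturalOrder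

theorem isLUB_union_iff_isLUB_pair {P : Type*} [Preorder P] {X Y : Set P} {a b c : P}
    (ha : IsLUB X a) (hb : IsLUB Y b) : IsLUB (X ∪ Y) c ↔ IsLUB {a, b} c := by
  rw [IsLUB, IsLUB, upperBounds_union, upperBounds_insert, upperBounds_singleton,
    ha.upperBounds_eq, hb.upperBounds_eq]

section StableJoins

variable [IsInverseSemigroup S] {X : Set S} {a j : S}

/-- A join that left and right multiplication preserve. -/
structure IsStableLUB (X : Set S) (j : S) : Prop where
  isLUB : IsLUB X j
  mul_left : ∀ c, IsLUB ((c * ·) '' X) (c * j)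
  mul_right : ∀ c, IsLUB ((· * c) '' X) (j * c)

theorem isStableLUB_empty : IsStableLUB (∅ : Set S) 0 := by
  constructor <;> simp [IsBot, zero_le]

theorem IsStableLUB.compat (h : IsStableLUB X j) (ha : ∀ x ∈ X, compat a x) : compat a j := by
  refine ⟨idem_of_isLUB (Set.forall_mem_image.2 fun x hx => (ha x hx).1) (h.mul_left a⁻¹), ?_⟩
  have idem_mul_inv : idem (j * a⁻¹) := by
    refine idem_of_isLUB (Set.forall_mem_image.2 fun x hx => ?_) (h.mul_right a⁻¹)
    simpa only [mul_inv_rev, inv_inv] using (ha x hx).2.inv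
  simpa only [mul_inv_rev, inv_inv] using idem_mul_inv.inv

end StableJoins

section FiniteJoins

variable {T : Type*} [Mul T] [Zero T] [Inv T] [IsBooleanInverseSemigroup T]
  {X Y : Set T} {a b j k : T}

theorem IsStableLUB.insert (h : IsStableLUB X j) (hk : isJoin a j k) :
    IsStableLUB (insert a X) k := by
  refine ⟨?_, fun c => ?_, fun c => ?_⟩
  · rw [Set.insert_eq, isLUB_union_iff_isLUB_pair isLUB_singleton h.isLUB]
    exact isJoin_iff_isLUB.1 hk
  · rw [Set.image_insert_eq, Set.insert_eq,
      isLUB_union_iff_isLUB_pair isLUB_singleton (h.mul_left c)]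
    exact isJoin_iff_isLUB.1 (IsBooleanInverseSemigroup.mul_join a j k c hk)
  · rw [Set.image_insert_eq, Set.insert_eq,
      isLUB_union_iff_isLUB_pair isLUB_singleton (h.mul_right c)]
    exact isJoin_iff_isLUB.1 (IsBooleanInverseSemigroup.join_mul a j k c hk)

theorem exists_isStableLUB_of_pairwise_compat (hX : X.Finite) (hc : X.Pairwise compat) :
    ∃ j, IsStableLUB X j := by
  induction X, hX using Set.Finite.induction_on with
  | empty => exact ⟨0, isStableLUB_empty⟩
  | @insert a X ha _ ih =>
    obtain ⟨j, hj⟩ := ih (hc.mono (Set.subset_insert a X))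
    have compat_a : ∀ x ∈ X, compat a x := fun x hx =>
      hc (Set.mem_insert a X) (Set.mem_insert_of_mem a hx) (ne_of_mem_of_not_mem hx ha).symm
    obtain ⟨k, hk⟩ := IsBooleanInverseSemigroup.compat_join a j (hj.compat compat_a)
    exact ⟨k, hj.insert hk⟩

theorem isStableLUB_of_finite (hX : X.Finite) (hj : IsLUB X j) : IsStableLUB X j := by
  have hc : X.Pairwise compat := fun x hx y hy _ => compat_of_le (hj.1 hx) (hj.1 hy)
  obtain ⟨k, hk⟩ := exists_isStableLUB_of_pairwise_compat hX hc
  rwa [hj.unique hk.isLUB]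

theorem isLUB_image2_mul (hX : X.Finite) (hY : Y.Finite) (ha : IsLUB X a) (hb : IsLUB Y b) :
    IsLUB (Set.image2 (· * ·) X Y) (a * b) := by
  refine ⟨?_, fun c hc => ?_⟩
  · rintro _ ⟨x, hx, y, hy, rfl⟩
    exact mul_le_mul' (ha.1 hx) (hb.1 hy)
  · refine ((isStableLUB_of_finite hX ha).mul_right b).2 (Set.forall_mem_image.2 fun x hx => ?_)
    refine ((isStableLUB_of_finite hY hb).mul_left x).2 (Set.forall_mem_image.2 fun y hy => ?_)
    exact hc ⟨x, hx, y, hy, rfl⟩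

theorem exists_idem_relative_complement {u : T} (hu : idem u) (hX : X.Finite)
    (hXu : ∀ x ∈ X, x ≤ u) : ∃ g, idem g ∧ (∀ x ∈ X, g * x = 0) ∧ IsLUB (insert g X) u := by
  obtain ⟨j, hj⟩ := exists_isStableLUB_of_pairwise_compat hX
    fun x hx y hy _ => compat_of_le (hXu x hx) (hXu y hy)
  have hju : j ≤ u := hj.isLUB.2 hXu
  obtain ⟨g, hg, -, hgj, hjoin⟩ := IsBooleanInverseSemigroup.relcomp u j hu (hu.of_le hju) hju
  refine ⟨g, hg, fun x hx => ?_, ?_⟩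
  · exact eq_zero_of_le_zero ((mul_le_mul_right (hj.isLUB.1 hx) g).trans_eq hgj)
  · rw [Set.insert_eq, Set.union_comm, isLUB_union_iff_isLUB_pair hj.isLUB isLUB_singleton]
    exact isJoin_iff_isLUB.1 hjoin

theorem exists_relative_complement {u : T} (hX : X.Finite) (hXu : ∀ x ∈ X, x ≤ u) :
    ∃ g, (∀ x ∈ X, orth g x) ∧ IsLUB (insert g X) u := by
  have dom_le : ∀ e ∈ (fun x => x⁻¹ * x) '' X, e ≤ u⁻¹ * u :=
    Set.forall_mem_image.2 fun x hx => inv_mul_self_le_of_le (hXu x hx)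
  obtain ⟨h, hh, h_mul, h_lub⟩ :=
    exists_idem_relative_complement (idem_inv_mul_self u) (hX.image _) dom_le
  refine ⟨u * h, fun x hx => ?_, ?_⟩
  · refine orth_of_le_of_mul_inv_eq_zero (mul_idem_le u hh) (hXu x hx) ?_
    calc u * h * x⁻¹ = u * (h * (x⁻¹ * x)) * x⁻¹ := by simp only [mul_assoc, inv_mul_inv_self]
      _ = 0 := by rw [h_mul _ (Set.mem_image_of_mem _ hx), mul_zero, zero_mul]
  · have mul_dom : (u * ·) '' ((fun x => x⁻¹ * x) '' X) = X := by
      rw [Set.image_image]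
      exact (Set.image_congr fun x hx => mul_inv_mul_of_le (hXu x hx)).trans (Set.image_id' X)
    have := (isStableLUB_of_finite ((hX.image _).insert h) h_lub).mul_left u
    rwa [Set.image_insert_eq, mul_dom, mul_inv_mul_self] at this

end FiniteJoins

section LocalBisections

variable {A B : Set S}

theorem KGlb.mono (hB : KGlb B) (h : A ⊆ B) : KGlb A :=
  ⟨fun x hx => hB.1 x (h hx), fun x hx y hy => hB.2 x (h hx) y (h hy)⟩

theorem KGlb_singleton {x : S} (hx : x ≠ 0) : KGlb {x} := by
  simpa only [KGlb, Set.mem_singleton_iff, forall_eq, implies_true, and_self, and_true] using hx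

variable [IsInverseSemigroup S] {a b x y : S}

theorem mul_ne_zero_of_inv_mul_self_eq (hx : x ≠ 0) (h : x⁻¹ * x = y * y⁻¹) : x * y ≠ 0 :=
  fun hxy => hx (by rw [← mul_inv_mul_self x, h, ← mul_assoc, hxy, zero_mul])

theorem inv_mul_self_mul_of_eq (h : x⁻¹ * x = y * y⁻¹) : (x * y)⁻¹ * (x * y) = y⁻¹ * y := calc
  (x * y)⁻¹ * (x * y) = y⁻¹ * (x⁻¹ * x) * y := by simp only [mul_inv_rev, mul_assoc]
  _ = y⁻¹ * y := by rw [h, inv_mul_inv_self]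

theorem mul_inv_self_mul_of_eq (h : x⁻¹ * x = y * y⁻¹) : x * y * (x * y)⁻¹ = x * x⁻¹ := calc
  x * y * (x * y)⁻¹ = x * (y * y⁻¹) * x⁻¹ := by simp only [mul_inv_rev, mul_assoc]
  _ = x * x⁻¹ := by rw [← h, mul_inv_mul_self]

theorem mul_lt_mul_of_inv_mul_self_eq (hax : a < x) (h : x⁻¹ * x = y * y⁻¹) : a * y < x * y := by
  refine (mul_le_mul_left hax.le y).lt_of_ne fun hay => hax.ne ?_
  calc a = a * y * y⁻¹ := by rw [mul_assoc, ← h, mul_inv_mul_self_of_le hax.le]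
    _ = x := by rw [hay, mul_assoc, ← h, mul_inv_mul_self]

theorem KGlb.restrictedSetMul (hA : KGlb A) (hB : KGlb B) : KGlb (restrictedSetMul A B) := by
  refine ⟨?_, ?_⟩
  · rintro _ ⟨x, hx, y, -, hxy, rfl⟩
    exact mul_ne_zero_of_inv_mul_self_eq (hA.1 x hx) hxy
  · rintro _ ⟨x, hx, y, hy, hxy, rfl⟩ _ ⟨x', hx', y', hy', hxy', rfl⟩
    rw [inv_mul_self_mul_of_eq hxy, inv_mul_self_mul_of_eq hxy', mul_inv_self_mul_of_eq hxy,
      mul_inv_self_mul_of_eq hxy']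
    refine ⟨fun hd => ?_, fun hr => ?_⟩
    · obtain rfl := (hB.2 y hy y' hy').1 hd
      rw [(hA.2 x hx x' hx').1 (hxy.trans hxy'.symm)]
    · obtain rfl := (hA.2 x hx x' hx').2 hr
      rw [(hB.2 y hy y' hy').2 (hxy.symm.trans hxy')]

theorem KGlb.finite (hE : {e : S | idem e}.Finite) (hA : KGlb A) : A.Finite :=
  Set.Finite.of_injOn (f := fun x => x⁻¹ * x) (fun x _ => idem_inv_mul_self x)
    (fun x hx y hy => (hA.2 x hx y hy).1) hE

theorem mem_betaMap : x ∈ betaMap a ↔ x ≠ 0 ∧ x ≤ a := Iff.rfl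

theorem KGlb_betaMap (a : S) : KGlb (betaMap a) :=
  ⟨fun _ hx => hx.1, fun _ hx _ hy =>
    ⟨eq_of_inv_mul_self_eq hx.2 hy.2, eq_of_mul_inv_self_eq hx.2 hy.2⟩⟩

theorem betaMap_zero : betaMap (0 : S) = ∅ :=
  Set.eq_empty_of_forall_notMem fun _ hx => hx.1 (eq_zero_of_le_zero hx.2)

theorem betaMap_mul (a b : S) : betaMap (a * b) = restrictedSetMul (betaMap a) (betaMap b) := by
  apply Set.Subset.antisymm
  · rintro x ⟨hx, hxab⟩
    -- `x` factors as the restricted product of `x * x⁻¹ * a` and `a⁻¹ * x`.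
    have left_le : x * x⁻¹ * a ≤ a := idem_mul_le a (idem_mul_inv_self x)
    have right_le : a⁻¹ * x ≤ b := calc
      a⁻¹ * x ≤ a⁻¹ * (a * b) := mul_le_mul_right hxab a⁻¹
      _ = a⁻¹ * a * b := (mul_assoc _ _ _).symm
      _ ≤ b := idem_mul_le b (idem_inv_mul_self a)
    have a_mul_inv_mul : a * (a⁻¹ * x) = x := by
      rw [← mul_inv_mul_of_le hxab]
      simp only [mul_assoc, mul_inv_mul_self_left]
    have x_eq : x = x * x⁻¹ * a * (a⁻¹ * x) := by
      rw [mul_assoc (x * x⁻¹), a_mul_inv_mul, mul_assoc, mul_inv_mul_self]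
    have composable : (x * x⁻¹ * a)⁻¹ * (x * x⁻¹ * a) = a⁻¹ * x * (a⁻¹ * x)⁻¹ := by
      simp only [mul_inv_rev, inv_inv, mul_assoc, inv_mul_inv_self_left]
    refine ⟨_, ⟨fun h => hx ?_, left_le⟩, _, ⟨fun h => hx ?_, right_le⟩, composable, x_eq⟩
    · rw [x_eq, h, zero_mul]
    · rw [x_eq, h, mul_zero]
  · rintro _ ⟨x, hx, y, hy, hxy, rfl⟩
    exact mem_betaMap.2 ⟨mul_ne_zero_of_inv_mul_self_eq hx.1 hxy, mul_le_mul' hx.2 hy.2⟩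

theorem self_mem_betaMap (ha : a ≠ 0) : a ∈ betaMap a :=
  ⟨ha, le_refl a⟩

theorem le_of_betaMap_subset (h : betaMap a ⊆ betaMap b) : a ≤ b := by
  obtain rfl | ha := eq_or_ne a 0
  · exact zero_le b
  · exact (h (self_mem_betaMap ha)).2

theorem betaMap_injective : Function.Injective (betaMap : S → Set S) := fun _ _ h =>
  (le_of_betaMap_subset h.subset).antisymm (le_of_betaMap_subset h.superset)

theorem finite_Iio (hE : {e : S | idem e}.Finite) (a : S) : (Set.Iio a).Finite := by
  refine (((KGlb_betaMap a).finite hE).insert 0).subset fun x hx => ?_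
  exact (eq_or_ne x 0).imp_right fun hx0 => mem_betaMap.2 ⟨hx0, hx.le⟩

theorem wellFoundedLT_of_finite_idem (hE : {e : S | idem e}.Finite) : WellFoundedLT S := by
  have : Finite {e : S | idem e} := hE
  have dom_strictMono :
      StrictMono fun a : S => (⟨a⁻¹ * a, idem_inv_mul_self a⟩ : {e : S | idem e}) :=
    fun a b hab => (inv_mul_self_le_of_le hab.le).lt_of_not_ge (not_inv_mul_self_le_of_lt hab)
  exact dom_strictMono.wellFoundedLT

end LocalBisections

section StrictPart

variable [IsInverseSemigroup S] {T : Type*} [Mul T] [Zero T] [Inv T] [IsInverseSemigroup T]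

theorem map_inv_of_mulHom (α : S →ₙ* T) (a : S) : α a⁻¹ = (α a)⁻¹ :=
  IsInverseSemigroup.inv_unique _ _
    (by simp only [← map_mul, mul_assoc, mul_inv_mul_self])
    (by simp only [← map_mul, mul_assoc, inv_mul_inv_self])

theorem monotone_of_mulHom (α : S →ₙ* T) : Monotone α := fun a b hab => by
  rw [← mul_inv_mul_of_le hab, map_mul, map_mul, map_inv_of_mulHom]
  exact mul_idem_le _ (idem_inv_mul_self _)

/-- `t` is the strict part of `α` at `x`: what remains of `α x` when all `α y` with `y < x` are
removed, i.e. the relative complement of their join in `α x`. -/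
structure IsStrictPart (α : S → T) (x : S) (t : T) : Prop where
  orth_of_lt : ∀ y < x, orth t (α y)
  isLUB_insert : IsLUB (insert t (α '' Set.Iio x)) (α x)

namespace IsStrictPart

theorem le {α : S → T} {x : S} {t : T} (ht : IsStrictPart α x t) : t ≤ α x :=
  ht.isLUB_insert.1 (Set.mem_insert _ _)

variable {α : S →ₙ* T} {x y e : S} {s t : T}

theorem inv (ht : IsStrictPart α x t) : IsStrictPart α x⁻¹ t⁻¹ := by
  refine ⟨fun y hy => ?_, ?_⟩
  · have hyx : y⁻¹ < x := by simpa using (invOrderIso S).strictMono hy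
    simpa only [map_inv_of_mulHom, inv_inv] using (ht.orth_of_lt y⁻¹ hyx).inv
  · have image_inv : invOrderIso T '' (α '' Set.Iio x) = α '' Set.Iio x⁻¹ := by
      rw [← invOrderIso_apply, ← OrderIso.image_Iio, Set.image_image, Set.image_image]
      simp only [invOrderIso_apply, map_inv_of_mulHom]
    have h := (invOrderIso T).isLUB_image'.2 ht.isLUB_insert
    rwa [Set.image_insert_eq, image_inv, invOrderIso_apply, invOrderIso_apply,
      ← map_inv_of_mulHom] at h

theorem mul_map_inv_mul_self (ht : IsStrictPart α x t) : t * α (x⁻¹ * x) = t := by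
  rw [map_mul, map_inv_of_mulHom, mul_inv_mul_self_of_le ht.le]

theorem map_mul_inv_self_mul (ht : IsStrictPart α x t) : α (x * x⁻¹) * t = t := by
  rw [map_mul, map_inv_of_mulHom, mul_inv_self_mul_of_le ht.le]

theorem mul_map_idem_eq_zero (ht : IsStrictPart α x t) (he : idem e) (hxe : ¬ x⁻¹ * x ≤ e) :
    t * α e = 0 := by
  have mul_lt : x * e < x := by
    refine (mul_idem_le x he).lt_of_ne fun h => hxe ?_
    have dom_eq : x⁻¹ * x = x⁻¹ * x * e := by rw [mul_assoc, h]
    exact dom_eq.trans_le (idem_mul_le e (idem_inv_mul_self x))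
  have dom_mul : x⁻¹ * x * e = (x * e)⁻¹ * (x * e) := by
    rw [mul_inv_rev, he.inv_eq, ← mul_assoc (e * x⁻¹), mul_assoc e,
      he.mul_comm (idem_inv_mul_self x), mul_assoc _ e, he]
  calc t * α e = t * α ((x * e)⁻¹ * (x * e)) := by
        rw [← dom_mul, map_mul α (x⁻¹ * x), ← mul_assoc, ht.mul_map_inv_mul_self]
    _ = 0 := by
        rw [map_mul, map_inv_of_mulHom, ← mul_assoc, (ht.orth_of_lt _ mul_lt).2, zero_mul]

theorem mul_map_eq_zero (hs : IsStrictPart α x s) (hxy : ¬ x⁻¹ * x ≤ y * y⁻¹) : s * α y = 0 := by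
  rw [← mul_inv_mul_self y, ← mul_assoc, map_mul, ← mul_assoc,
    hs.mul_map_idem_eq_zero (idem_mul_inv_self y) hxy, zero_mul]

theorem map_idem_mul_eq_zero (ht : IsStrictPart α x t) (he : idem e) (hxe : ¬ x * x⁻¹ ≤ e) :
    α e * t = 0 := by
  have h : t⁻¹ * α e = 0 := ht.inv.mul_map_idem_eq_zero he (by rwa [inv_inv])
  have h' := congrArg (·⁻¹) h
  simpa only [mul_inv_rev, inv_inv, ← map_inv_of_mulHom, he.inv_eq, idem_zero.inv_eq] using h'

theorem mul_eq_zero (hs : IsStrictPart α x s) (ht : IsStrictPart α y t)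
    (hxy : x⁻¹ * x ≠ y * y⁻¹) : s * t = 0 := by
  by_cases hle : x⁻¹ * x ≤ y * y⁻¹
  · have hge : ¬ y * y⁻¹ ≤ x⁻¹ * x := fun hge => hxy (hle.antisymm hge)
    rw [← hs.mul_map_inv_mul_self, mul_assoc,
      ht.map_idem_mul_eq_zero (idem_inv_mul_self x) hge, mul_zero]
  · rw [← ht.map_mul_inv_self_mul, ← mul_assoc,
      hs.mul_map_idem_eq_zero (idem_mul_inv_self y) hle, zero_mul]

theorem orth (hs : IsStrictPart α x s) (ht : IsStrictPart α y t)
    (hd : x⁻¹ * x ≠ y⁻¹ * y) (hr : x * x⁻¹ ≠ y * y⁻¹) : orth s t :=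
  ⟨hs.inv.mul_eq_zero ht (by rwa [inv_inv]), hs.mul_eq_zero ht.inv (by rwa [inv_inv])⟩

end IsStrictPart

end StrictPart

section BooleanStrictPart

variable [IsInverseSemigroup S] {T : Type*} [Mul T] [Zero T] [Inv T] [IsBooleanInverseSemigroup T]

theorem exists_isStrictPart (α : S →ₙ* T) {x : S} (hx : (Set.Iio x).Finite) :
    ∃ t, IsStrictPart α x t := by
  obtain ⟨t, t_orth, t_lub⟩ := exists_relative_complement (hx.image α) (u := α x)
    (Set.forall_mem_image.2 fun y hy => monotone_of_mulHom α (le_of_lt hy))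
  exact ⟨t, fun y hy => t_orth _ (Set.mem_image_of_mem α hy), t_lub⟩

namespace IsStrictPart

theorem le_of_finite {α : S → T} {x : S} {s t : T} (hx : (Set.Iio x).Finite)
    (hs : IsStrictPart α x s) (ht : IsStrictPart α x t) : s ≤ t := by
  have stable := isStableLUB_of_finite ((hx.image α).insert t) ht.isLUB_insert
  have lub_mul := stable.mul_right (s⁻¹ * s)
  rw [mul_inv_mul_of_le hs.le] at lub_mul
  refine lub_mul.2 (Set.forall_mem_image.2 ?_)
  rintro _ (rfl | ⟨y, hy, rfl⟩)
  · exact mul_idem_le _ (idem_inv_mul_self s)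
  · have h := congrArg (·⁻¹) (hs.orth_of_lt y hy).2
    simp only [mul_inv_rev, inv_inv, idem_zero.inv_eq] at h
    simp only [← mul_assoc, h, zero_mul, zero_le]

theorem unique {α : S → T} {x : S} {s t : T} (hx : (Set.Iio x).Finite)
    (hs : IsStrictPart α x s) (ht : IsStrictPart α x t) : s = t :=
  (hs.le_of_finite hx ht).antisymm (ht.le_of_finite hx hs)

variable {α : S →ₙ* T} {x y : S} {s t : T}

theorem mul_mem_upperBounds (hs : IsStrictPart α x s) (ht : IsStrictPart α y t)
    (hxy : x⁻¹ * x = y * y⁻¹) {c : T}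
    (hc : c ∈ upperBounds (insert (s * t) (α '' Set.Iio (x * y)))) :
    c ∈ upperBounds
      (Set.image2 (· * ·) (insert s (α '' Set.Iio x)) (insert t (α '' Set.Iio y))) := by
  have map_mul_le : ∀ x' < x, ∀ q ≤ α y, α x' * q ≤ c := fun x' hx' q hq => calc
    α x' * q ≤ α (x' * y) := (mul_le_mul_right hq _).trans_eq (map_mul α x' y).symm
    _ ≤ c := hc (Or.inr ⟨x' * y, mul_lt_mul_of_inv_mul_self_eq hx' hxy, rfl⟩)
  rintro _ ⟨s, rfl | ⟨x', hx', rfl⟩, t, rfl | ⟨y', hy', rfl⟩, rfl⟩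
  · exact hc (Set.mem_insert _ _)
  · have mul_map : s * α y' = 0 := hs.mul_map_eq_zero (hxy ▸ not_mul_inv_self_le_of_lt hy')
    exact mul_map.trans_le (zero_le c)
  · exact map_mul_le x' hx' t ht.le
  · exact map_mul_le x' hx' (α y') (monotone_of_mulHom α (le_of_lt hy'))

theorem mul (hx : (Set.Iio x).Finite) (hy : (Set.Iio y).Finite) (hs : IsStrictPart α x s)
    (ht : IsStrictPart α y t) (hxy : x⁻¹ * x = y * y⁻¹) : IsStrictPart α (x * y) (s * t) := by
  have mul_le : s * t ≤ α (x * y) := (mul_le_mul' hs.le ht.le).trans_eq (map_mul α x y).symm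
  have map_le {z : S} (hz : z < x * y) : α z ≤ α (x * y) := monotone_of_mulHom α hz.le
  refine ⟨fun z hz => orth_of_le_of_mul_inv_eq_zero mul_le (map_le hz) ?_, ?_, fun c hc => ?_⟩
  · have not_le : ¬ y⁻¹ * y ≤ z⁻¹ * z⁻¹⁻¹ := by
      rw [inv_inv, ← inv_mul_self_mul_of_eq hxy]
      exact not_inv_mul_self_le_of_lt hz
    rw [← map_inv_of_mulHom, mul_assoc, ht.mul_map_eq_zero not_le, mul_zero]
  · rintro _ (rfl | ⟨z, hz, rfl⟩)
    exacts [mul_le, map_le hz]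
  · rw [map_mul]
    exact (isLUB_image2_mul ((hx.image α).insert s) ((hy.image α).insert t)
      hs.isLUB_insert ht.isLUB_insert).2 (hs.mul_mem_upperBounds ht hxy hc)

end IsStrictPart

end BooleanStrictPart

section StrictPartsOfBeta

variable [IsInverseSemigroup S] {T : Type*} [Mul T] [Zero T] [Inv T] [IsInverseSemigroup T]

theorem isLUB_image_strictPart_betaMap [WellFoundedLT S] {α : S →ₙ* T} {φ : S → T} (h0 : α 0 = 0)
    (hφ : ∀ x, IsStrictPart α x (φ x)) (a : S) : IsLUB (φ '' betaMap a) (α a) := by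
  refine ⟨Set.forall_mem_image.2 fun x hx => (hφ x).le.trans (monotone_of_mulHom α hx.2),
    fun c hc => ?_⟩
  replace hc : ∀ x ≤ a, φ x ≤ c := fun x hxa => by
    obtain rfl | hx := eq_or_ne x 0
    · exact (hφ 0).le.trans (h0.trans_le (zero_le c))
    · exact hc ⟨x, ⟨hx, hxa⟩, rfl⟩
  induction a using WellFoundedLT.induction with
  | ind a ih =>
    refine (hφ a).isLUB_insert.2 ?_
    rintro _ (rfl | ⟨y, hy, rfl⟩)
    · exact hc a le_rfl
    · exact ih y hy fun x hx => hc x (hx.trans (le_of_lt hy))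

end StrictPartsOfBeta

section UniversalProperty

variable [IsInverseSemigroup S] {T : Type*} [Mul T] [Zero T] [Inv T] [IsBooleanInverseSemigroup T]
  {α : S →ₙ* T} {φ : S → T} {A B : Set S}

theorem exists_isLUB_image_strictPart (hφ : ∀ x, IsStrictPart α x (φ x)) (hA : KGlb A)
    (hfin : A.Finite) : ∃ t, IsLUB (φ '' A) t := by
  have pairwise_compat : (φ '' A).Pairwise compat := by
    rintro _ ⟨x, hx, rfl⟩ _ ⟨y, hy, rfl⟩ hne
    have hxy : x ≠ y := fun h => hne (congrArg φ h)
    exact ((hφ x).orth (hφ y) (mt (hA.2 x hx y hy).1 hxy) (mt (hA.2 x hx y hy).2 hxy)).compat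
  obtain ⟨t, ht⟩ := exists_isStableLUB_of_pairwise_compat (hfin.image φ) pairwise_compat
  exact ⟨t, ht.isLUB⟩

theorem isLUB_image_strictPart_restrictedSetMul (hS : ∀ x : S, (Set.Iio x).Finite)
    (hφ : ∀ x, IsStrictPart α x (φ x)) (hA : A.Finite) (hB : B.Finite) {a b : T}
    (ha : IsLUB (φ '' A) a) (hb : IsLUB (φ '' B) b) :
    IsLUB (φ '' restrictedSetMul A B) (a * b) := by
  have lub_mul := isLUB_image2_mul (hA.image φ) (hB.image φ) ha hb
  have map_mul_of_eq {x y : S} (hxy : x⁻¹ * x = y * y⁻¹) : φ (x * y) = φ x * φ y :=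
    (hφ (x * y)).unique (hS _) ((hφ x).mul (hS x) (hS y) (hφ y) hxy)
  refine ⟨?_, fun c hc => lub_mul.2 ?_⟩
  · rintro _ ⟨_, ⟨x, hx, y, hy, hxy, rfl⟩, rfl⟩
    rw [map_mul_of_eq hxy]
    exact lub_mul.1 ⟨φ x, ⟨x, hx, rfl⟩, φ y, ⟨y, hy, rfl⟩, rfl⟩
  · rintro _ ⟨_, ⟨x, hx, rfl⟩, _, ⟨y, hy, rfl⟩, rfl⟩
    by_cases hxy : x⁻¹ * x = y * y⁻¹
    · exact (map_mul_of_eq hxy).symm.trans_le (hc ⟨x * y, ⟨x, hx, y, hy, hxy, rfl⟩, rfl⟩)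
    · exact ((hφ x).mul_eq_zero (hφ y) hxy).trans_le (zero_le c)

theorem isKGMorphism_of_isLUB_image_strictPart (hE : {e : S | idem e}.Finite)
    (hφ : ∀ x, IsStrictPart α x (φ x)) {γ : Set S → T}
    (hγ : ∀ A, KGlb A → IsLUB (φ '' A) (γ A)) : isKGMorphism γ := by
  refine ⟨?_, fun A B hA hB => ?_, fun A B hA hB hAB => ?_⟩
  · have lub_empty := hγ ∅ (betaMap_zero (S := S) ▸ KGlb_betaMap 0)
    rw [Set.image_empty] at lub_empty
    exact lub_empty.unique isStableLUB_empty.isLUB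
  · exact (hγ _ (hA.restrictedSetMul hB)).unique <|
      isLUB_image_strictPart_restrictedSetMul (finite_Iio hE) hφ (hA.finite hE) (hB.finite hE)
        (hγ A hA) (hγ B hB)
  · rw [isJoin_iff_isLUB, ← isLUB_union_iff_isLUB_pair (hγ A hA) (hγ B hB), ← Set.image_union]
    exact hγ _ hAB

end UniversalProperty

namespace isKGMorphism

variable {T : Type*} [Mul T] [Zero T] [Inv T] [IsInverseSemigroup T]
  {γ : Set S → T} {A B : Set S}

theorem mono (hγ : isKGMorphism γ) (hB : KGlb B) (hAB : A ⊆ B) : γ A ≤ γ B := by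
  have join := hγ.2.2 A B (hB.mono hAB) hB (by rwa [Set.union_eq_self_of_subset_left hAB])
  rw [Set.union_eq_self_of_subset_left hAB] at join
  exact join.1

theorem isLUB_image_singleton (hγ : isKGMorphism γ) (hfin : A.Finite) (hA : KGlb A) :
    IsLUB ((fun x => γ {x}) '' A) (γ A) := by
  induction A, hfin using Set.Finite.induction_on with
  | empty =>
    rw [Set.image_empty, hγ.1]
    exact isStableLUB_empty.isLUB
  | @insert x A _ _ ih =>
    have hAx : KGlb A := hA.mono (Set.subset_insert x A)
    have join := hγ.2.2 {x} A (KGlb_singleton (hA.1 x (Set.mem_insert x A))) hAx hA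
    rw [Set.image_insert_eq, Set.insert_eq, isLUB_union_iff_isLUB_pair isLUB_singleton (ih hAx)]
    exact isJoin_iff_isLUB.1 join

variable [IsInverseSemigroup S]

theorem isStrictPart_singleton (hγ : isKGMorphism γ) {α : S →ₙ* T}
    (hβ : ∀ a, γ (betaMap a) = α a) {x : S} (hx : x ≠ 0) (hfin : (betaMap x).Finite) :
    IsStrictPart α x (γ {x}) := by
  have singleton_le {y : S} (hy : y ≠ 0) : γ {y} ≤ α y := by
    rw [← hβ y]
    exact hγ.mono (KGlb_betaMap y) (Set.singleton_subset_iff.2 (self_mem_betaMap hy))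
  refine ⟨fun y hy => ?_, ?_, fun c hc => ?_⟩
  · refine orth_of_le_of_mul_inv_eq_zero (singleton_le hx) (monotone_of_mulHom α hy.le) ?_
    have mul_betaMap : restrictedSetMul {x} (betaMap y⁻¹) = ∅ := by
      refine Set.eq_empty_of_forall_notMem ?_
      rintro _ ⟨_, rfl, z, hz, hxz, -⟩
      refine not_inv_mul_self_le_of_lt hy (hxz.trans_le ?_)
      simpa only [inv_inv] using mul_inv_self_le_of_le hz.2
    rw [← map_inv_of_mulHom, ← hβ, ← hγ.2.1 _ _ (KGlb_singleton hx) (KGlb_betaMap _),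
      mul_betaMap, hγ.1]
  · rintro _ (rfl | ⟨y, hy, rfl⟩)
    exacts [singleton_le hx, monotone_of_mulHom α (le_of_lt hy)]
  · rw [← hβ x]
    refine (hγ.isLUB_image_singleton hfin (KGlb_betaMap x)).2 (Set.forall_mem_image.2 ?_)
    intro y hy
    obtain rfl | hlt := (mem_betaMap.1 hy).2.eq_or_lt
    · exact hc (Set.mem_insert _ _)
    · exact (singleton_le hy.1).trans (hc (Or.inr ⟨y, hlt, rfl⟩))

end isKGMorphism


theorem exists_unique_isKGMorphism_of_finite_idem [IsInverseSemigroup S] {T : Type*} [Mul T]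
    [Zero T] [Inv T] [IsBooleanInverseSemigroup T] (hE : {e : S | idem e}.Finite) (α : S →ₙ* T)
    (h0 : α 0 = 0) :
    ∃ γ : Set S → T, isKGMorphism γ ∧ (∀ a, γ (betaMap a) = α a) ∧
      ∀ γ' : Set S → T, isKGMorphism γ' → (∀ a, γ' (betaMap a) = α a) →
        ∀ A, KGlb A → γ' A = γ A := by
  have := wellFoundedLT_of_finite_idem hE
  choose φ hφ using fun x => exists_isStrictPart α (finite_Iio hE x)
  choose! γ hγ using fun A (hA : KGlb A) => exists_isLUB_image_strictPart hφ hA (hA.finite hE)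
  refine ⟨γ, isKGMorphism_of_isLUB_image_strictPart hE hφ hγ, fun a => ?_,
    fun γ' hγ' hβ' A hA => ?_⟩
  · exact (hγ _ (KGlb_betaMap a)).unique (isLUB_image_strictPart_betaMap h0 hφ a)
  · have singleton_eq : ∀ x ∈ A, γ' {x} = φ x := fun x hx =>
      (hγ'.isStrictPart_singleton hβ' (hA.1 x hx) ((KGlb_betaMap x).finite hE)).unique
        (finite_Iio hE x) (hφ x)
    have lub := hγ'.isLUB_image_singleton (hA.finite hE) hA
    rw [Set.image_congr singleton_eq] at lub
    exact lub.unique (hγ A hA)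

theorem booleanization_of_finite_inverse_semigroup_general (S : Type u)
    [Mul S] [Zero S] [Inv S] [IsInverseSemigroup S] (hE : {e : S | idem e}.Finite) :
    (∀ a : S, KGlb (betaMap a)) ∧
    (betaMap (0 : S) = (∅ : Set S)) ∧
    (∀ a b : S, betaMap (a * b) = restrictedSetMul (betaMap a) (betaMap b)) ∧
    (∀ a b : S, betaMap a = betaMap b → a = b) ∧
    (∀ (T : Type v) [Mul T] [Zero T] [Inv T] [IsBooleanInverseSemigroup T]
        (α : S → T), (∀ a b : S, α (a * b) = α a * α b) → α 0 = 0 →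
      ∃ γ : Set S → T, isKGMorphism γ ∧ (∀ a : S, γ (betaMap a) = α a) ∧
        ∀ γ' : Set S → T, isKGMorphism γ' → (∀ a : S, γ' (betaMap a) = α a) →
          ∀ A : Set S, KGlb A → γ' A = γ A) :=
  ⟨KGlb_betaMap, betaMap_zero, betaMap_mul, fun _ _ h => betaMap_injective h,
    fun _ _ _ _ _ α map_mul map_zero =>
      exists_unique_isKGMorphism_of_finite_idem hE ⟨α, map_mul⟩ map_zero⟩

/-- For a finite inverse semigroup `S` with zero, the Booleanization of `S` is
`K(𝒢(S))`: the map `β` is an injective zero-preserving homomorphism into the local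
bisections of the restricted groupoid of `S`, and it is universal among
zero-preserving homomorphisms from `S` to Boolean inverse semigroups. -/
theorem booleanization_of_finite_inverse_semigroup (S : Type u)
    [Mul S] [Zero S] [Inv S] [IsInverseSemigroup S] [Finite S] :
    (∀ a : S, KGlb (betaMap a)) ∧
    (betaMap (0 : S) = (∅ : Set S)) ∧
    (∀ a b : S, betaMap (a * b) = restrictedSetMul (betaMap a) (betaMap b)) ∧
    (∀ a b : S, betaMap a = betaMap b → a = b) ∧
    (∀ (T : Type v) [Mul T] [Zero T] [Inv T] [IsBooleanInverseSemigroup T]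
        (α : S → T), (∀ a b : S, α (a * b) = α a * α b) → α 0 = 0 →
      ∃ γ : Set S → T, isKGMorphism γ ∧ (∀ a : S, γ (betaMap a) = α a) ∧
        ∀ γ' : Set S → T, isKGMorphism γ' → (∀ a : S, γ' (betaMap a) = α a) →
          ∀ A : Set S, KGlb A → γ' A = γ A) :=
  booleanization_of_finite_inverse_semigroup_general S (Set.toFinite _)

end Paper
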